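/- Let x ∈ Δ_G and let X_1 be obtained from X_0 = x by one step of the Gibbs sampler on Δ_G. Then for every h ∈ G, E[X_1[h]] = (1 − 1/n)·x[h] + (1/(nm))·∑_{r∈R} x[hr]. -/

import Mathlib

open MeasureTheory

noncomputable section

/-- Uniform probability measure on a finset. -/
def unifOn {α : Type*} [MeasurableSpace α] (s : Finset α) : Measure α :=
  (s.card : ENNReal)⁻¹ • ∑ a ∈ s, Measure.dirac a

/-- Total variation distance between two measures. -/
def tvDist {α : Type*} [MeasurableSpace α] (μ ν : Measure α) : ℝ :=
  ⨆ A : {A : Set α // MeasurableSet A}, ((μ A).toReal - (ν A).toReal)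

variable (G : Type*) [Group G] [Fintype G] [DecidableEq G] [MeasurableSpace G]
  [DiscreteMeasurableSpace G]

/-- The simplex of probability vectors indexed by `G`. -/
def simplexG : Set (G → ℝ) := {x | (∀ g, 0 ≤ x g) ∧ ∑ g, x g = 1}

/-- The uniform (normalized `(n-1)`-dimensional Hausdorff) measure on the simplex. -/
def UG : Measure (G → ℝ) :=
  (μH[(Fintype.card G : ℝ) - 1] (simplexG G))⁻¹ •
    (μH[(Fintype.card G : ℝ) - 1]).restrict (simplexG G)

/-- One step of the Gibbs sampler on the simplex from update datum `(g, r, λ)`. -/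
def gibbsStepG (x : G → ℝ) (u : G × G × ℝ) : G → ℝ := fun h =>
  if h = u.1 then u.2.2 * (x u.1 + x (u.1 * u.2.1))
  else if h = u.1 * u.2.1 then (1 - u.2.2) * (x u.1 + x (u.1 * u.2.1))
  else x h

/-- Law of the random update datum: `g` uniform on `G`, `r` uniform on `R`,
`λ` uniform on `[0,1]`. -/
def driveG (R : Finset G) : Measure (G × G × ℝ) :=
  (unifOn (Finset.univ : Finset G)).prod
    ((unifOn R).prod ((volume : Measure ℝ).restrict (Set.Icc 0 1)))

/-- Law of the Gibbs sampler after `T` steps started at `x`. -/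
def lawG (R : Finset G) (x : G → ℝ) (T : ℕ) : Measure (G → ℝ) :=
  Measure.map (fun ω : Fin T → G × G × ℝ => (List.ofFn ω).foldl (gibbsStepG G) x)
    (Measure.pi fun _ => driveG G R)

/-- The transition matrix of the slowed simple random walk on `G`. -/
def KhatM (R : Finset G) : G → G → ℝ := fun z w =>
  if z = w then 1 - 2 / (Fintype.card G : ℝ)
  else if z⁻¹ * w ∈ R then 2 / ((Fintype.card G : ℝ) * R.card) else 0

/-- The spectral gap `γ̂ = 1 - λ̂₂` of `K̂`, with the second-largest eigenvalue
expressed by the variational (Courant–Fischer) characterization. -/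
def gapHat (R : Finset G) : ℝ :=
  1 - sSup {lam : ℝ | ∃ v : G → ℝ, ∑ g, v g = 0 ∧ ∑ g, (v g) ^ 2 = 1 ∧
    lam = ∑ g, ∑ h, v g * KhatM G R g h * v h}

/-!
Conditionally on `(g, r)`, averaging over `λ` replaces both entries `x[g]` and `x[gr]` by their
mean. The entry at `h` is therefore affected only by two choices of `g`: `g = h`, which adds
`(x[hr] - x[h]) / 2`, and `g = hr⁻¹`, which adds `(x[hr⁻¹] - x[h]) / 2`. Over a
symmetric `R`, inversion matches the terms `x[hr⁻¹]` with the terms `x[hr]`.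
-/

section UniformMeasure

variable {α β E : Type*} [MeasurableSpace α] [MeasurableSpace β] [NormedAddCommGroup E]

instance sFinite_unifOn (s : Finset α) : SFinite (unifOn s) := by
  rw [unifOn, ← Measure.sum_coe_finset]
  infer_instance

theorem unifOn_prod (s : Finset α) (ν : Measure β) [SFinite ν] :
    (unifOn s).prod ν = (s.card : ENNReal)⁻¹ • ∑ a ∈ s, ν.map (Prod.mk a) := by
  simp only [unifOn, Measure.prod_smul_left, ← Measure.sum_coe_finset, Measure.prod_sum_left,
    Measure.dirac_prod]

variable [MeasurableSingletonClass α] {s : Finset α} {ν : Measure β} [SFinite ν] {f : α × β → E}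

theorem integrable_unifOn_prod (hf : ∀ a ∈ s, Integrable (fun y => f (a, y)) ν) :
    Integrable f ((unifOn s).prod ν) := by
  rcases s.eq_empty_or_nonempty with rfl | hs
  · simp [unifOn]
  · rw [unifOn_prod]
    have inv_card_ne_top : (s.card : ENNReal)⁻¹ ≠ ⊤ := by simpa using hs.ne_empty
    refine .smul_measure (integrable_finsetSum_measure.2 fun a ha => ?_) inv_card_ne_top
    exact (measurableEmbedding_prodMk_left a).integrable_map_iff.2 (hf a ha)

theorem integral_unifOn_prod [NormedSpace ℝ E]
    (hf : ∀ a ∈ s, Integrable (fun y => f (a, y)) ν) :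
    ∫ u, f u ∂(unifOn s).prod ν = (s.card : ℝ)⁻¹ • ∑ a ∈ s, ∫ y, f (a, y) ∂ν := by
  have hf_map : ∀ a ∈ s, Integrable f (ν.map (Prod.mk a)) := fun a ha =>
    (measurableEmbedding_prodMk_left a).integrable_map_iff.2 (hf a ha)
  rw [unifOn_prod, integral_smul_measure, integral_finsetSum_measure hf_map]
  simp only [(measurableEmbedding_prodMk_left _).integral_map, ENNReal.toReal_inv,
    ENNReal.toReal_natCast]

end UniformMeasure

theorem integral_driveG {Γ E : Type*} [Fintype Γ] [MeasurableSpace Γ] [MeasurableSingletonClass Γ]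
    [NormedAddCommGroup E] [NormedSpace ℝ E] {R : Finset Γ} (f : Γ × Γ × ℝ → E)
    (hf : ∀ g, ∀ r ∈ R, IntegrableOn (fun l => f (g, r, l)) (Set.Icc 0 1)) :
    ∫ u, f u ∂driveG Γ R =
      (Fintype.card Γ : ℝ)⁻¹ • ∑ g, (R.card : ℝ)⁻¹ • ∑ r ∈ R,
        ∫ l in Set.Icc 0 1, f (g, r, l) := by
  have integral_inner (g : Γ) := integral_unifOn_prod (f := fun u => f (g, u)) (hf g)
  rw [driveG, integral_unifOn_prod fun g _ => integrable_unifOn_prod (hf g), Finset.card_univ]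
  simp only [integral_inner]

section PairAverage

/-- The vector `x` with its entries at `a` and `b` both replaced by their mean. This is the
expectation of a Gibbs update of the pair `{a, b}`. For `a = b` it is `x` itself. -/
def pairAverage {ι : Type*} [DecidableEq ι] (x : ι → ℝ) (a b : ι) : ι → ℝ := fun i =>
  if i = a ∨ i = b then (x a + x b) / 2 else x i

theorem pairAverage_apply_eq_add {ι : Type*} [DecidableEq ι] (x : ι → ℝ) (a b i : ι) :
    pairAverage x a b i =
      x i + (if i = a then (x b - x a) / 2 else 0) + (if i = b then (x a - x b) / 2 else 0) := by
  rcases eq_or_ne i a with rfl | hia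
  · rcases eq_or_ne i b with rfl | hib
    · simp [pairAverage]
    · simp only [pairAverage, true_or, if_true, if_neg hib]
      ring
  · rcases eq_or_ne i b with rfl | hib
    · simp only [pairAverage, or_true, if_true, if_neg hia]
      ring
    · simp [pairAverage, hia, hib]

variable {Γ : Type*} [Group Γ] [DecidableEq Γ]

theorem sum_pairAverage_mul_right [Fintype Γ] (x : Γ → ℝ) (r h : Γ) :
    ∑ g, pairAverage x g (g * r) h =
      ((Fintype.card Γ : ℝ) - 1) * x h + (x (h * r) + x (h * r⁻¹)) / 2 := by
  have eq_mul_iff (g : Γ) : h = g * r ↔ h * r⁻¹ = g := mul_inv_eq_iff_eq_mul.symm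
  simp only [pairAverage_apply_eq_add, eq_mul_iff, Finset.sum_add_distrib, Finset.sum_ite_eq,
    Finset.mem_univ, if_true, Finset.sum_const, Finset.card_univ, nsmul_eq_mul,
    inv_mul_cancel_right]
  ring

theorem integrableOn_gibbsStepG_apply (x : Γ → ℝ) (g r h : Γ) :
    IntegrableOn (fun l => gibbsStepG Γ x (g, r, l) h) (Set.Icc 0 1) := by
  refine Continuous.integrableOn_Icc ?_
  simp only [gibbsStepG]
  split_ifs <;> fun_prop

theorem setIntegral_gibbsStepG_apply (x : Γ → ℝ) (g r h : Γ) :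
    ∫ l in Set.Icc 0 1, gibbsStepG Γ x (g, r, l) h = pairAverage x g (g * r) h := by
  have integral_eq_half : ∫ l in (0 : ℝ)..1, l = 1 / 2 := by simp
  have integral_one_sub_eq_half : ∫ l in (0 : ℝ)..1, (1 - l) = 1 / 2 := by
    simp [intervalIntegral.integral_comp_sub_left (fun l : ℝ => l)]
  rw [integral_Icc_eq_integral_Ioc, ← intervalIntegral.integral_of_le zero_le_one]
  rcases eq_or_ne h g with rfl | hg
  · simp only [gibbsStepG, pairAverage, if_true, true_or, intervalIntegral.integral_mul_const,
      integral_eq_half]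
    ring
  · rcases eq_or_ne h (g * r) with rfl | hgr
    · simp only [gibbsStepG, pairAverage, if_neg hg, if_true, or_true,
        intervalIntegral.integral_mul_const, integral_one_sub_eq_half]
      ring
    · simp [gibbsStepG, pairAverage, hg, hgr]

end PairAverage

theorem sum_comp_inv_of_inv_mem {Γ M : Type*} [InvolutiveInv Γ] [AddCommMonoid M]
    {R : Finset Γ} (hsym : ∀ r ∈ R, r⁻¹ ∈ R) (f : Γ → M) :
    ∑ r ∈ R, f r⁻¹ = ∑ r ∈ R, f r :=
  Finset.sum_nbij' (·⁻¹) (·⁻¹) hsym hsym (by simp) (by simp) (by simp)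

theorem gibbs_sampler_cayley_one_step_mean_general
    (R : Finset G) (hne : R.Nonempty) (x : G → ℝ) (h : G) :
    ∫ u, gibbsStepG G x u h ∂(driveG G R) =
      (1 - 1 / (Fintype.card G : ℝ)) * x h +
        1 / ((Fintype.card G : ℝ) * R.card) * ∑ r ∈ R, (x (h * r) + x (h * r⁻¹)) / 2 := by
  have hR : (R.card : ℝ) ≠ 0 := by exact_mod_cast hne.card_ne_zero
  have hG : (Fintype.card G : ℝ) ≠ 0 := by exact_mod_cast Fintype.card_ne_zero
  calc ∫ u, gibbsStepG G x u h ∂(driveG G R)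
      = (Fintype.card G : ℝ)⁻¹ * ∑ g, (R.card : ℝ)⁻¹ * ∑ r ∈ R, pairAverage x g (g * r) h := by
        rw [integral_driveG (fun u => gibbsStepG G x u h) fun g r _ =>
          integrableOn_gibbsStepG_apply x g r h]
        simp only [setIntegral_gibbsStepG_apply, smul_eq_mul]
    _ = (Fintype.card G : ℝ)⁻¹ * ((R.card : ℝ)⁻¹ * ∑ r ∈ R,
          (((Fintype.card G : ℝ) - 1) * x h + (x (h * r) + x (h * r⁻¹)) / 2)) := by
        simp only [← Finset.mul_sum, Finset.sum_comm (s := Finset.univ),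
          sum_pairAverage_mul_right]
    _ = _ := by
        rw [Finset.sum_add_distrib, Finset.sum_const, nsmul_eq_mul]
        field_simp

/-- One-step expectation of the Gibbs sampler on the simplex:
`E[X₁[h]] = (1 - 1/n) x[h] + (1/(nm)) ∑_{r ∈ R} x[hr]`. -/
theorem gibbs_sampler_cayley_one_step_mean
    (R : Finset G) (hsym : ∀ r ∈ R, r⁻¹ ∈ R) (hid : (1 : G) ∉ R) (hne : R.Nonempty)
    (hgen : Subgroup.closure (R : Set G) = ⊤)
    (x : G → ℝ) (hx : x ∈ simplexG G) (h : G) :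
    ∫ u, gibbsStepG G x u h ∂(driveG G R) =
      (1 - 1 / (Fintype.card G : ℝ)) * x h +
        1 / ((Fintype.card G : ℝ) * R.card) * ∑ r ∈ R, x (h * r) := by
  rw [gibbs_sampler_cayley_one_step_mean_general G R hne x h, ← Finset.sum_div,
    Finset.sum_add_distrib, sum_comp_inv_of_inv_mem hsym fun r => x (h * r), add_self_div_two]

end
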